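/- arXiv:2108.05314 — 6 statements merged into one kernel-verified Lean document; each statement's English description precedes it below -/
import Mathlib

section
/- Let κ be a regular uncountable cardinal and B a Boolean algebra satisfying the κ-chain condition. Then for every family ⟨b_α : α < κ⟩ of elements of B \ {⊥} and every positive integer ℓ there exist distinct ordinals α_0, …, α_{ℓ−1} < κ such that b_{α_0} ⊓ b_{α_1} ⊓ ⋯ ⊓ b_{α_{ℓ−1}} ≠ ⊥. -/
/-- **Inductive core of Theorem 7.2.** In a Boolean algebra with the `κ`-c.c. (`κ` regular
uncountable), any `κ`-indexed family of nonzero elements contains, for every positive `ℓ`,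
`ℓ` distinct members with nonzero common meet. -/
theorem stmt2 {B : Type u} [BooleanAlgebra B] (κ : Cardinal.{u})
    (hreg : κ.IsRegular) (hunc : Cardinal.aleph0 < κ)
    (hcc : ∀ A : Set B, (∀ a ∈ A, a ≠ ⊥) → A.Pairwise (fun x y => x ⊓ y = ⊥) →
      Cardinal.mk A < κ)
    {ι : Type u} (hι : Cardinal.mk ι = κ)
    (b : ι → B) (hb : ∀ i, b i ≠ ⊥) (ℓ : ℕ) (hℓ : 0 < ℓ) :
    ∃ s : Finset ι, s.card = ℓ ∧ s.inf b ≠ ⊥ := by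
  classical
  by_contra hno
  have hlt : ∀ s : Finset ι, s.inf b ≠ ⊥ → s.card < ℓ := by
    intro s hs
    by_contra hc
    obtain ⟨t, hts, htc⟩ := Finset.exists_subset_card_eq (not_lt.mp hc)
    exact hno ⟨t, htc, fun h => hs (le_bot_iff.mp (h ▸ Finset.inf_mono hts))⟩
  -- every index lies in a maximal finite set with nonzero meet
  have hmax : ∀ i, ∃ s : Finset ι, i ∈ s ∧ s.inf b ≠ ⊥ ∧
      ∀ t : Finset ι, s ⊆ t → t.inf b ≠ ⊥ → t = s := by
    intro i
    let P : ℕ → Prop := fun n => ∃ s : Finset ι, i ∈ s ∧ s.inf b ≠ ⊥ ∧ s.card = n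
    have hP1 : P 1 := ⟨{i}, by simp, by simpa using hb i, by simp⟩
    have hle : 1 ≤ ℓ := hℓ
    obtain ⟨s, his, hs, hsc⟩ := Nat.findGreatest_spec (P := P) hle hP1
    refine ⟨s, his, hs, fun t hst ht => ?_⟩
    have := Nat.le_findGreatest (P := P) (hlt t ht).le ⟨t, hst his, ht, rfl⟩
    exact (Finset.eq_of_subset_of_card_le hst (by omega)).symm
  choose S hiS hS hSmax using hmax
  have key : ∀ i j, (S i).inf b ⊓ (S j).inf b ≠ ⊥ → S i = S j := by
    intro i j h
    rw [← Finset.inf_union] at h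
    exact (hSmax i _ Finset.subset_union_left h).symm.trans
      (hSmax j _ Finset.subset_union_right h)
  have hA := hcc (Set.range fun i => (S i).inf b)
    (by rintro _ ⟨i, rfl⟩; exact hS i)
    (by
      rintro _ ⟨i, rfl⟩ _ ⟨j, rfl⟩ hne
      by_contra h
      exact hne (by simp only [key i j h]))
  have : Infinite ι := Cardinal.infinite_iff.mpr (hι ▸ hunc.le)
  obtain ⟨⟨_, i, rfl⟩, hinf⟩ := Cardinal.exists_infinite_fiber
    (Set.rangeFactorization fun i => (S i).inf b) (by rw [hι]; exact hA)
  rw [Set.infinite_coe_iff] at hinf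
  refine hinf ((S i).finite_toSet.subset fun j hj => ?_)
  have hj' : (S j).inf b = (S i).inf b := congrArg Subtype.val hj
  have : S j = S i := key j i (by rw [hj', inf_idem]; exact hS i)
  exact this ▸ hiS j
end

section
/- Let μ be a regular uncountable cardinal, B a Boolean algebra satisfying the μ-chain condition, and ⟨a_n : n < ω⟩ a maximal antichain of B. Then there is no family ⟨b_α : α < μ⟩ of elements of B such that: (i) for every finite u ⊆ μ, the meet ⨅_{α ∈ u} b_α is ≠ ⊥; and (ii) for every nonempty finite u ⊆ μ and every natural number n ≤ |u|, (⨅_{α ∈ u} b_α) ⊓ a_n = ⊥. -/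
/-- **Boolean-algebraic core of Theorem 7.2.** Let `μ` be regular uncountable, `B` a Boolean
algebra with the `μ`-c.c., and `⟨a n : n < ω⟩` a maximal antichain of `B`. Then there is no
`μ`-indexed family `⟨b α⟩` all of whose finite meets are nonzero yet, for every nonempty
finite `u` and every `n ≤ |u|`, the meet over `u` is disjoint from `a n`. -/
theorem stmt4 {B : Type u} [BooleanAlgebra B] (μ : Cardinal.{u})
    (hreg : μ.IsRegular) (hunc : Cardinal.aleph0 < μ)
    (hcc : ∀ A : Set B, (∀ a ∈ A, a ≠ ⊥) → A.Pairwise (fun x y => x ⊓ y = ⊥) →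
      Cardinal.mk A < μ)
    (a : ℕ → B) (ha0 : ∀ n, a n ≠ ⊥) (hdisj : ∀ m n : ℕ, m ≠ n → a m ⊓ a n = ⊥)
    (hmax : ∀ x : B, x ≠ ⊥ → ∃ n, x ⊓ a n ≠ ⊥)
    {ι : Type u} (hι : Cardinal.mk ι = μ) :
    ¬ ∃ b : ι → B,
      (∀ u : Finset ι, u.inf b ≠ ⊥) ∧
      (∀ u : Finset ι, u.Nonempty → ∀ n : ℕ, n ≤ u.card → u.inf b ⊓ a n = ⊥) := by
  classical
  rintro ⟨b, hb, hba⟩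
  have key : ∀ n : ℕ, Cardinal.mk {i : ι | b i ⊓ a n ≠ ⊥} < μ := by
    intro n
    set f : Finset ι → B := fun u => u.inf b ⊓ a n with hf
    set M : Set (Finset ι) := {u | f u ≠ ⊥ ∧ ∀ v, u ⊆ v → f v ≠ ⊥ → v = u} with hM
    have hcard : ∀ u, f u ≠ ⊥ → u.card ≤ n := by
      intro u hu
      by_contra h
      have h1 : 0 < u.card := by omega
      exact hu (hba u (Finset.card_pos.1 h1) n (by omega))
    have hext : ∀ k : ℕ, ∀ u, f u ≠ ⊥ → n ≤ u.card + k → ∃ v ∈ M, u ⊆ v := by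
      intro k
      induction k with
      | zero =>
        intro u hu hk
        refine ⟨u, ⟨hu, fun v huv hv => ?_⟩, subset_rfl⟩
        exact (Finset.eq_of_subset_of_card_le huv ((hcard v hv).trans (by omega))).symm
      | succ k ih =>
        intro u hu hk
        by_cases hm : u ∈ M
        · exact ⟨u, hm, subset_rfl⟩
        · have : ∃ v, u ⊆ v ∧ f v ≠ ⊥ ∧ v ≠ u := by
            by_contra hcon
            push Not at hcon
            exact hm ⟨hu, hcon⟩
          obtain ⟨v, huv, hv, hne⟩ := this
          have hlt : u.card < v.card :=
            Finset.card_lt_card (Finset.ssubset_iff_subset_ne.2 ⟨huv, hne.symm⟩)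
          obtain ⟨w, hw, hvw⟩ := ih v hv (by omega)
          exact ⟨w, hw, huv.trans hvw⟩
    have hdis : ∀ u ∈ M, ∀ v ∈ M, f u ⊓ f v ≠ ⊥ → u = v := by
      intro u hu v hv h
      have h2 : f (u ∪ v) ≠ ⊥ := by
        have : f (u ∪ v) = f u ⊓ f v := by
          simp only [hf, Finset.inf_union]
          rw [inf_inf_distrib_right]
        rwa [this]
      rw [← hu.2 _ Finset.subset_union_left h2]
      exact hv.2 _ Finset.subset_union_right h2
    have hinj : Set.InjOn f M := by
      intro u hu v hv h
      apply hdis u hu v hv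
      rw [← h, inf_idem]
      exact hu.1
    have hMlt : Cardinal.mk M < μ := by
      rw [← Cardinal.mk_image_eq_of_injOn f M hinj]
      apply hcc
      · rintro _ ⟨u, hu, rfl⟩
        exact hu.1
      · rintro _ ⟨u, hu, rfl⟩ _ ⟨v, hv, rfl⟩ hne
        by_contra h
        exact hne (congrArg f (hdis u hu v hv h))
    have hsub : {i : ι | b i ⊓ a n ≠ ⊥} ⊆ ⋃ u : M, ((u : Finset ι) : Set ι) := by
      intro i hi
      obtain ⟨v, hv, hiv⟩ := hext n {i} (by simpa [hf] using hi) (by omega)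
      exact Set.mem_iUnion.2 ⟨⟨v, hv⟩, by simpa using hiv⟩
    refine (Cardinal.mk_le_mk_of_subset hsub).trans_lt ?_
    refine (Cardinal.card_iUnion_lt_iff_forall_of_isRegular hreg hMlt).2 fun u => ?_
    exact (Cardinal.lt_aleph0_of_finite _).trans hunc
  have hlt : Cardinal.mk (⋃ n : ULift.{u} ℕ, {i : ι | b i ⊓ a n.down ≠ ⊥}) < μ :=
    (Cardinal.card_iUnion_lt_iff_forall_of_isRegular hreg (by simpa using hunc)).2
      fun n => key n.down
  have huniv : (⋃ n : ULift.{u} ℕ, {i : ι | b i ⊓ a n.down ≠ ⊥}) = Set.univ := by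
    refine Set.eq_univ_of_forall fun i => ?_
    obtain ⟨n, hn⟩ := hmax (b i) (by simpa using hb {i})
    exact Set.mem_iUnion.2 ⟨⟨n⟩, hn⟩
  rw [huniv, Cardinal.mk_univ, hι] at hlt
  exact lt_irrefl _ hlt
end

section
/- Let μ be a regular uncountable cardinal, B a complete Boolean algebra satisfying the μ-chain condition, and D an ultrafilter on B that is not ℵ₁-complete. Then there exists a map f from the finite subsets of μ to D satisfying f(v) ≤ f(u) whenever u ⊆ v, such that no family ⟨b_α : α < μ⟩ of elements of D satisfies ⨅_{α ∈ u} b_α ≤ f(u) for every nonempty finite u ⊆ μ. -/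
/-- **Theorem 7.2 (a `μ`-c.c. quotient blocks flexibility).** Let `μ` be regular uncountable,
`B` a complete Boolean algebra with the `μ`-c.c., and `D` an ultrafilter on `B` that is not
`ℵ₁`-complete. Then there is a monotone (order-reversing) map `f` from finite subsets of `μ`
into `D` admitting no multiplicative refinement inside `D`. -/
theorem stmt5 {B : Type u} [CompleteBooleanAlgebra B] (μ : Cardinal.{u})
    (hreg : μ.IsRegular) (hunc : Cardinal.aleph0 < μ)
    (hcc : ∀ A : Set B, (∀ a ∈ A, a ≠ ⊥) → A.Pairwise (fun x y => x ⊓ y = ⊥) →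
      Cardinal.mk A < μ)
    (D : Set B)
    (hbot : ⊥ ∉ D)
    (hup : ∀ x ∈ D, ∀ y : B, x ≤ y → y ∈ D)
    (hinf : ∀ x ∈ D, ∀ y ∈ D, x ⊓ y ∈ D)
    (hult : ∀ x : B, x ∈ D ∨ xᶜ ∈ D)
    (hnc : ¬ ∀ C : Set B, C.Countable → C ⊆ D → sInf C ∈ D)
    {ι : Type u} (hι : Cardinal.mk ι = μ) :
    ∃ f : Finset ι → B,
      (∀ u : Finset ι, f u ∈ D) ∧
      (∀ u v : Finset ι, u ⊆ v → f v ≤ f u) ∧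
      ¬ ∃ b : ι → B, (∀ i, b i ∈ D) ∧
        ∀ u : Finset ι, u.Nonempty → u.inf b ≤ f u := by
  classical
  have htop : (⊤ : B) ∈ D := by
    rcases hult ⊤ with h | h
    · exact h
    · exact hup _ h _ le_top
  -- a decreasing sequence in `D` with infimum `⊥`
  obtain ⟨c, hcD, hcanti, hcbot⟩ : ∃ c : ℕ → B, (∀ n, c n ∈ D) ∧ Antitone c ∧
      ∀ x, (∀ n, x ≤ c n) → x = ⊥ := by
    push Not at hnc
    obtain ⟨C, hC, hCD, hCinf⟩ := hnc
    obtain ⟨e, he⟩ := (hC.insert ⊤).exists_eq_range (Set.insert_nonempty _ _)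
    have heD : ∀ n, e n ∈ D := by
      intro n
      have h : e n ∈ insert ⊤ C := he ▸ Set.mem_range_self n
      rcases h with h | h
      · exact h ▸ htop
      · exact hCD h
    refine ⟨fun n => (sInf C)ᶜ ⊓ (Finset.range n).inf e, ?_, ?_, ?_⟩
    · intro n
      refine hinf _ ((hult (sInf C)).resolve_left hCinf) _ ?_
      induction n with
      | zero => simpa using htop
      | succ k ih =>
        rw [Finset.range_add_one, Finset.inf_insert]
        exact hinf _ (heD k) _ ih
    · intro m n hmn
      exact inf_le_inf_left _ (Finset.inf_mono (Finset.range_mono hmn))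
    · intro x hx
      have h1 : x ≤ (sInf C)ᶜ := (hx 0).trans inf_le_left
      have h2 : x ≤ sInf C := by
        refine le_sInf fun y hy => ?_
        have h : y ∈ Set.range e := he ▸ Set.mem_insert_of_mem _ hy
        obtain ⟨n, rfl⟩ := h
        exact (hx (n + 1)).trans (inf_le_right.trans (Finset.inf_le (by simp)))
      exact le_bot_iff.1 ((le_inf h2 h1).trans inf_compl_eq_bot.le)
  refine ⟨fun u => c u.card, fun u => hcD _, fun u v h => hcanti (Finset.card_le_card h), ?_⟩
  rintro ⟨b, hbD, hb⟩
  have hbne : ∀ i, b i ≠ ⊥ := fun i h => hbot (h ▸ hbD i)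
  -- a maximal antichain among elements meeting only finitely many `b i`
  obtain ⟨A, hA⟩ : ∃ A : Set B, Maximal (fun A : Set B =>
      (∀ a ∈ A, a ≠ ⊥ ∧ {i | a ⊓ b i ≠ ⊥}.Finite) ∧
        A.Pairwise (fun x y => x ⊓ y = ⊥)) A := by
    refine zorn_subset {A : Set B | (∀ a ∈ A, a ≠ ⊥ ∧ {i | a ⊓ b i ≠ ⊥}.Finite) ∧
        A.Pairwise (fun x y => x ⊓ y = ⊥)} ?_
    intro K hK hchain
    refine ⟨⋃₀ K, ⟨?_, ?_⟩, fun s hs => Set.subset_sUnion_of_mem hs⟩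
    · rintro a ⟨s, hs, ha⟩
      exact (hK hs).1 a ha
    · exact (Set.pairwise_sUnion hchain.directedOn).2 fun s hs => (hK hs).2
  have hAcard := hcc A (fun a ha => (hA.prop.1 a ha).1) hA.prop.2
  have hT : Cardinal.mk (⋃ a : A, {i | (a : B) ⊓ b i ≠ ⊥} : Set ι) < μ := by
    refine (Cardinal.mk_iUnion_le _).trans_lt ?_
    refine Cardinal.mul_lt_of_lt hunc.le hAcard (lt_of_le_of_lt ?_ hunc)
    refine ciSup_le' fun a => ?_
    exact (hA.prop.1 a a.2).2.countable.le_aleph0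
  obtain ⟨β, hβ⟩ : ∃ β, β ∉ (⋃ a : A, {i | (a : B) ⊓ b i ≠ ⊥} : Set ι) := by
    by_contra! h
    rw [Set.eq_univ_of_forall h, Cardinal.mk_univ, hι] at hT
    exact lt_irrefl _ hT
  have hβA : ∀ a ∈ A, a ⊓ b β = ⊥ := by
    intro a ha
    by_contra h
    exact hβ (Set.mem_iUnion.2 ⟨⟨a, ha⟩, h⟩)
  have key : ∀ y, y ≠ ⊥ → y ≤ (sSup A)ᶜ → {i | y ⊓ b i ≠ ⊥}.Infinite := by
    intro y hy hys hfin
    have hdis : ∀ a ∈ A, y ⊓ a = ⊥ := fun a ha =>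
      (le_compl_iff_disjoint_right.1 (hys.trans (compl_le_compl (le_sSup ha)))).eq_bot
    have hyA : y ∈ A := by
      refine hA.le_of_ge (y := insert y A) ⟨?_, ?_⟩ (Set.subset_insert _ _)
        (Set.mem_insert _ _)
      · rintro a (rfl | ha)
        · exact ⟨hy, hfin⟩
        · exact hA.prop.1 a ha
      · refine hA.prop.2.insert fun a ha _ => ⟨hdis a ha, ?_⟩
        rw [inf_comm]
        exact hdis a ha
    exact hy (by simpa using hdis y hyA)
  have hs : (sSup A)ᶜ ≠ ⊥ := by
    intro h
    apply hbne β
    rw [← le_bot_iff, ← h, le_compl_iff_disjoint_left, sSup_disjoint_iff]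
    exact fun a ha => disjoint_iff.2 (hβA a ha)
  obtain ⟨n, hn⟩ : ∃ n, ¬ (sSup A)ᶜ ≤ c n := by
    by_contra! h
    exact hs (hcbot _ h)
  have step : ∀ k : ℕ, ∃ u : Finset ι, u.card = k ∧
      ((sSup A)ᶜ ⊓ (c n)ᶜ) ⊓ u.inf b ≠ ⊥ := by
    intro k
    induction k with
    | zero =>
      refine ⟨∅, rfl, ?_⟩
      simp only [Finset.inf_empty, inf_top_eq]
      intro h
      exact hn (by simpa using (disjoint_iff.2 h).le_compl_right)
    | succ k ih =>
      obtain ⟨u, hu, hne⟩ := ih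
      obtain ⟨i, hi, hiu⟩ := (key _ hne (inf_le_left.trans inf_le_left)).exists_notMem_finset u
      refine ⟨insert i u, by rw [Finset.card_insert_of_notMem hiu, hu], ?_⟩
      rw [Finset.inf_insert, inf_comm (b i), ← inf_assoc]
      exact hi
  obtain ⟨u, hu, hne⟩ := step (n + 1)
  have h1 : u.inf b ≤ c n := by
    refine (hb u (Finset.card_pos.1 (by omega))).trans (hcanti (by omega))
  apply hne
  rw [← le_bot_iff, ← compl_inf_self (c n)]
  exact inf_le_inf inf_le_right h1
end

section
/- Let κ be a regular uncountable cardinal, X a set, and for each ε < κ let v⁰_ε and v¹_ε be finite subsets of X with v⁰_ε ∩ v¹_ε = ∅. Then there exists U ⊆ κ with |U| = κ such that for all ε, ε′ ∈ U, (v⁰_ε ∪ v⁰_{ε′}) ∩ (v¹_ε ∪ v¹_{ε′}) = ∅. -/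
open Cardinal in
lemma stmt8_caseB {X : Type u} [DecidableEq X] (κ : Cardinal.{u})
    (hreg : κ.IsRegular) {ι : Type u} (a : ι → Finset X) (S : Set ι) (hS : κ ≤ #S)
    (hx : ∀ x : X, #{ε ∈ S | x ∈ a ε} < κ) :
    ∃ U ⊆ S, κ ≤ #U ∧ U.PairwiseDisjoint a := by
  obtain ⟨U, hU⟩ := zorn_subset {U : Set ι | U ⊆ S ∧ U.PairwiseDisjoint a} (by
    intro c hc hchain
    refine ⟨⋃₀ c, ⟨Set.sUnion_subset fun s hs => (hc hs).1, ?_⟩,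
      fun s hs => Set.subset_sUnion_of_mem hs⟩
    exact (Set.pairwiseDisjoint_sUnion hchain.directedOn).2 fun s hs => (hc hs).2)
  refine ⟨U, hU.prop.1, ?_, hU.prop.2⟩
  by_contra hlt
  rw [not_le] at hlt
  have hW : #(⋃ ε ∈ U, (a ε : Set X)) < κ :=
    (card_biUnion_lt_iff_forall_of_isRegular hreg hlt).2 fun ε _ =>
      (Cardinal.lt_aleph0_of_finite _).trans_le hreg.aleph0_le
  have h2 : #(⋃ x ∈ (⋃ ε ∈ U, (a ε : Set X)), {ε ∈ S | x ∈ a ε}) < κ :=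
    (card_biUnion_lt_iff_forall_of_isRegular hreg hW).2 fun x _ => hx x
  have hsub : S ⊆ U ∪ ⋃ x ∈ (⋃ ε ∈ U, (a ε : Set X)), {ε ∈ S | x ∈ a ε} := by
    intro ε hε
    by_contra hn
    simp only [Set.mem_union, Set.mem_iUnion, not_or, not_exists] at hn
    obtain ⟨hnU, hn⟩ := hn
    apply hnU
    refine hU.le_of_ge (y := insert ε U) ⟨Set.insert_subset hε hU.prop.1, ?_⟩
      (Set.subset_insert _ _) (Set.mem_insert _ _)
    refine hU.prop.2.insert fun j hj _ => ?_
    rw [Finset.disjoint_left]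
    intro x h1 h3
    exact hn x ⟨j, hj, h3⟩ ⟨hε, h1⟩
  exact absurd (hS.trans ((mk_le_mk_of_subset hsub).trans (mk_union_le _ _)))
    (not_le.2 (add_lt_of_lt hreg.aleph0_le hlt h2))

open Cardinal in
lemma stmt8_aux {X : Type u} [DecidableEq X] (κ : Cardinal.{u})
    (hreg : κ.IsRegular) {ι : Type u} (n : ℕ) : ∀ (v0 v1 : ι → Finset X) (S : Set ι),
    κ ≤ #S → (∀ ε ∈ S, Disjoint (v0 ε) (v1 ε)) → (∀ ε ∈ S, (v0 ε).card + (v1 ε).card ≤ n) →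
    ∃ U ⊆ S, κ ≤ #U ∧ ∀ ε ∈ U, ∀ ε' ∈ U, Disjoint (v0 ε) (v1 ε') := by
  induction n with
  | zero =>
    intro v0 v1 S hS _ hc
    refine ⟨S, subset_rfl, hS, fun ε hε ε' _ => ?_⟩
    have := hc ε hε
    have h0 : v0 ε = ∅ := Finset.card_eq_zero.1 (by omega)
    simp [h0]
  | succ n ih =>
    intro v0 v1 S hS hd hc
    by_cases h0 : ∃ x, κ ≤ #{ε ∈ S | x ∈ v0 ε}
    · obtain ⟨x, hx⟩ := h0
      obtain ⟨U, hUS, hU, h⟩ := ih (fun ε => (v0 ε).erase x) v1 _ hx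
        (fun ε hε => (hd ε hε.1).mono_left (Finset.erase_subset _ _))
        (fun ε hε => by
          have := hc ε hε.1
          have := Finset.card_erase_add_one hε.2
          omega)
      refine ⟨U, fun ε hε => (hUS hε).1, hU, fun ε hε ε' hε' => ?_⟩
      have h1 := h ε hε ε' hε'
      have h2 := Finset.disjoint_left.1 (hd ε' (hUS hε').1) (hUS hε').2
      rw [Finset.disjoint_left] at h1 ⊢
      intro y hy
      by_cases hyx : y = x
      · exact hyx ▸ h2
      · exact h1 (Finset.mem_erase.2 ⟨hyx, hy⟩)
    by_cases h0' : ∃ x, κ ≤ #{ε ∈ S | x ∈ v1 ε}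
    · obtain ⟨x, hx⟩ := h0'
      obtain ⟨U, hUS, hU, h⟩ := ih v0 (fun ε => (v1 ε).erase x) _ hx
        (fun ε hε => (hd ε hε.1).mono_right (Finset.erase_subset _ _))
        (fun ε hε => by
          have := hc ε hε.1
          have := Finset.card_erase_add_one hε.2
          omega)
      refine ⟨U, fun ε hε => (hUS hε).1, hU, fun ε hε ε' hε' => ?_⟩
      have h1 := h ε hε ε' hε'
      have h2 := Finset.disjoint_right.1 (hd ε (hUS hε).1) (hUS hε).2
      rw [Finset.disjoint_right] at h1 ⊢
      intro y hy
      by_cases hyx : y = x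
      · exact hyx ▸ h2
      · exact h1 (Finset.mem_erase.2 ⟨hyx, hy⟩)
    push Not at h0 h0'
    obtain ⟨U, hUS, hU, h⟩ := stmt8_caseB κ hreg (fun ε => v0 ε ∪ v1 ε) S hS (fun x => by
      refine lt_of_le_of_lt ?_ (add_lt_of_lt hreg.aleph0_le (h0 x) (h0' x))
      refine (mk_le_mk_of_subset ?_).trans (mk_union_le _ _)
      rintro ε ⟨hε, hm⟩
      rcases Finset.mem_union.1 hm with hm | hm
      · exact Or.inl ⟨hε, hm⟩
      · exact Or.inr ⟨hε, hm⟩)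
    refine ⟨U, hUS, hU, fun ε hε ε' hε' => ?_⟩
    by_cases he : ε = ε'
    · subst he
      exact hd ε (hUS hε)
    · exact (h hε hε' he).mono Finset.subset_union_left Finset.subset_union_right


/-- **Δ-system step in Case 2 of Claim 5.8.** Given `κ` regular uncountable and `κ` many
pairs of disjoint finite subsets `v⁰ ε, v¹ ε` of `X`, there is a `κ`-sized subfamily such
that for any two indices the union of the "positive" sides is disjoint from the union of the
"negative" sides. -/
theorem stmt8 {X : Type u} [DecidableEq X] (κ : Cardinal.{u})
    (hreg : κ.IsRegular) (hunc : Cardinal.aleph0 < κ)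
    {ι : Type u} (hι : Cardinal.mk ι = κ)
    (v0 v1 : ι → Finset X) (hdisj : ∀ ε : ι, Disjoint (v0 ε) (v1 ε)) :
    ∃ U : Set ι, Cardinal.mk U = κ ∧
      ∀ ε ∈ U, ∀ ε' ∈ U, Disjoint (v0 ε ∪ v0 ε') (v1 ε ∪ v1 ε') := by
  have hex : ∃ n : ULift.{u} ℕ,
      κ ≤ Cardinal.mk {ε : ι | (v0 ε).card + (v1 ε).card ≤ n.down} := by
    by_contra hcon
    push Not at hcon
    have h := (Cardinal.card_iUnion_lt_iff_forall_of_isRegular hreg (by simpa using hunc)).2 hcon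
    have hu : (⋃ n : ULift.{u} ℕ, {ε : ι | (v0 ε).card + (v1 ε).card ≤ n.down}) = Set.univ :=
      Set.eq_univ_of_forall fun ε => Set.mem_iUnion.2 ⟨⟨_⟩, le_refl ((v0 ε).card + (v1 ε).card)⟩
    rw [hu, Cardinal.mk_univ, hι] at h
    exact lt_irrefl _ h
  obtain ⟨n, hn⟩ := hex
  obtain ⟨U, -, hU, h⟩ := stmt8_aux κ hreg n.down v0 v1 _ hn (fun ε _ => hdisj ε) (fun ε hε => hε)
  refine ⟨U, le_antisymm (hι ▸ Cardinal.mk_set_le U) hU, fun ε hε ε' hε' => ?_⟩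
  simp only [Finset.disjoint_union_left, Finset.disjoint_union_right]
  exact ⟨⟨h _ hε _ hε, h _ hε' _ hε⟩, h _ hε _ hε', h _ hε' _ hε'⟩
end

section
/- Let k and n be integers with 2 ≤ k ≤ n, let v be an index set, and let ⟨C_α : α ∈ v⟩ be a Δ-system of sets with heart C* (i.e., C_α ∩ C_β = C* for all distinct α, β ∈ v). For each α ∈ v let g_α : [C_α]^k → {0,1} be such that g_α and g_β agree on [C*]^k for all α, β ∈ v. Assume that for each α ∈ v there is no n-element set A ⊆ C_α with g_α(B) = 1 for every B ∈ [A]^k. Then there is no n-element set A ⊆ ⋃_{α ∈ v} C_α such that for every B ∈ [A]^k there exists α ∈ v with B ⊆ C_α and g_α(B) = 1. -/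
/-- **Combinatorial core of equation (32) in Lemma 6.5.** Let `2 ≤ k ≤ n`, let
`⟨C a : a ∈ v⟩` be a Δ-system with heart `C*`, and let `g a : [C a]^k → {0,1}` agree on
`[C*]^k`. If no `C a` contains an `n`-element set all of whose `k`-element subsets get value
`1` under `g a`, then neither does the union: there is no `n`-element `A ⊆ ⋃ C a` such that
every `k`-element `B ⊆ A` satisfies `B ⊆ C a` and `g a B = 1` for some `a`. -/
theorem stmt10 {α : Type u} (k n : ℕ) (hk : 2 ≤ k) (hkn : k ≤ n)
    {v : Type u} (C : v → Set α) (Cstar : Set α)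
    (hΔ : ∀ a b : v, a ≠ b → C a ∩ C b = Cstar)
    (g : v → Finset α → Bool)
    (hagree : ∀ a b : v, ∀ B : Finset α, ↑B ⊆ Cstar → B.card = k → g a B = g b B)
    (hloc : ∀ a : v, ¬ ∃ A : Finset α, ↑A ⊆ C a ∧ A.card = n ∧
      ∀ B ⊆ A, B.card = k → g a B = true) :
    ¬ ∃ A : Finset α, (↑A ⊆ ⋃ a : v, C a) ∧ A.card = n ∧
      ∀ B ⊆ A, B.card = k → ∃ a : v, ↑B ⊆ C a ∧ g a B = true := by
  classical
  rintro ⟨A, hA, hAn, hB⟩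
  have key : ∃ a, (A : Set α) ⊆ C a := by
    by_cases hs : (A : Set α) ⊆ Cstar
    · obtain ⟨B, hBA, hBk⟩ := Finset.exists_subset_card_eq (hAn ▸ hkn : k ≤ A.card)
      obtain ⟨a, -, -⟩ := hB B hBA hBk
      refine ⟨a, fun y hy => ?_⟩
      obtain ⟨c, hc⟩ := Set.mem_iUnion.1 (hA hy)
      by_cases hac : a = c
      · exact hac ▸ hc
      · have h := hs hy
        rw [← hΔ a c hac] at h
        exact h.1
    · obtain ⟨x, hx, hxs⟩ := Set.not_subset.1 hs
      obtain ⟨a, ha⟩ := Set.mem_iUnion.1 (hA hx)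
      refine ⟨a, fun y hy => ?_⟩
      have hsub : ({x, y} : Finset α) ⊆ A := by
        intro z hz
        simp only [Finset.mem_insert, Finset.mem_singleton] at hz
        rcases hz with rfl | rfl
        · exact hx
        · exact hy
      obtain ⟨B, h1, h2, h3⟩ := Finset.exists_subsuperset_card_eq hsub
        (Finset.card_le_two.trans hk) (hAn ▸ hkn : k ≤ A.card)
      obtain ⟨b, hb, -⟩ := hB B h2 h3
      have hxb : x ∈ C b := hb (h1 (by simp))
      have hyb : y ∈ C b := hb (h1 (by simp))
      by_cases hab : a = b
      · exact hab ▸ hyb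
      · exact absurd (hΔ a b hab ▸ (⟨ha, hxb⟩ : x ∈ C a ∩ C b)) hxs
  obtain ⟨a, ha⟩ := key
  refine hloc a ⟨A, ha, hAn, fun B hBA hBk => ?_⟩
  obtain ⟨b, hb, hg⟩ := hB B hBA hBk
  by_cases hab : a = b
  · exact hab ▸ hg
  · rw [hagree a b B _ hBk]
    · exact hg
    · rw [← hΔ a b hab]
      exact fun z hz => ⟨ha (hBA hz), hb hz⟩
end

section
/- Fix a nonempty finite linearly ordered index set I and an ordinal λ, and let S be the set of all functions β̄ : I → λ. Define a relation ≤_S on S as follows: given β̄, γ̄ ∈ S, let v = v(β̄, γ̄) be the largest set of ordinals that is simultaneously an end-segment of range(β̄) and an end-segment of range(γ̄); declare β̄ ≤_S γ̄ if and only if either (range(β̄) \ v and range(γ̄) \ v are both nonempty and max(range(β̄) \ v) < max(range(γ̄) \ v)), or (range(β̄) \ v = ∅ and range(γ̄) \ v ≠ ∅), or (range(β̄) \ v = range(γ̄) \ v = ∅ and β̄ is lexicographically ≤ γ̄ as an I-indexed tuple of ordinals). Then ≤_S is a linear order on S, and in fact a well-order: every nonempty subset of S has a ≤_S-least element. -/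
noncomputable section

open scoped Classical

/-- `u` is an end-segment of the finite set of ordinals `r`: `u ⊆ r` and `u` is upward
closed within `r`. -/
def IsEndSegment (r u : Finset Ordinal) : Prop :=
  u ⊆ r ∧ ∀ x ∈ r, ∀ y ∈ u, y ≤ x → x ∈ u

/-- `v` is the largest common end-segment of the finite sets of ordinals `r` and `s`. -/
def IsMaxCommonEnd (r s v : Finset Ordinal) : Prop :=
  IsEndSegment r v ∧ IsEndSegment s v ∧
    ∀ u : Finset Ordinal, IsEndSegment r u → IsEndSegment s u → u ⊆ v

/-- The range of an `I`-indexed tuple of ordinals, as a finite set of ordinals. -/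
def rng {I : Type*} [Fintype I] (β : I → Ordinal) : Finset Ordinal :=
  Finset.image β Finset.univ

/-- The lexicographic order on `I`-indexed tuples of ordinals (`I` a linear order). -/
def lexLE {I : Type*} [LinearOrder I] (β γ : I → Ordinal) : Prop :=
  β = γ ∨ ∃ i : I, β i < γ i ∧ ∀ j : I, j < i → β j = γ j

/-- The order `≤_S` of the proof of Lemma 5.10: letting `v` be the largest common
end-segment of `range β` and `range γ`, compare `max (range β \ v)` with
`max (range γ \ v)`, an empty difference counting as smallest, and break remaining ties
lexicographically. -/
def leS {I : Type*} [Fintype I] [LinearOrder I] (β γ : I → Ordinal) : Prop :=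
  ∃ v : Finset Ordinal, IsMaxCommonEnd (rng β) (rng γ) v ∧
    ((∃ h1 : (rng β \ v).Nonempty, ∃ h2 : (rng γ \ v).Nonempty,
        (rng β \ v).max' h1 < (rng γ \ v).max' h2) ∨
      (rng β \ v = ∅ ∧ (rng γ \ v).Nonempty) ∨
      (rng β \ v = ∅ ∧ rng γ \ v = ∅ ∧ lexLE β γ))

theorem exists_maxCommonEnd (r s : Finset Ordinal) : ∃ v, IsMaxCommonEnd r s v := by
  refine ⟨r.filter (fun x => ∀ y, x ≤ y → (y ∈ r ↔ y ∈ s)), ⟨?_, ?_⟩, ⟨?_, ?_⟩, ?_⟩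
  · exact Finset.filter_subset _ _
  · intro x hx y hy hyx
    rw [Finset.mem_filter] at hy ⊢
    exact ⟨hx, fun z hz => hy.2 z (hyx.trans hz)⟩
  · intro x hx
    rw [Finset.mem_filter] at hx
    exact (hx.2 x le_rfl).1 hx.1
  · intro x hx y hy hyx
    rw [Finset.mem_filter] at hy ⊢
    exact ⟨(hy.2 x hyx).2 hx, fun z hz => hy.2 z (hyx.trans hz)⟩
  · intro u hr hs x hx
    rw [Finset.mem_filter]
    exact ⟨hr.1 hx, fun y hy => ⟨fun h => hs.1 (hr.2 y h x hx hy), fun h => hr.1 (hs.2 y h x hx hy)⟩⟩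

theorem IsMaxCommonEnd.symm' {r s v : Finset Ordinal} (h : IsMaxCommonEnd r s v) :
    IsMaxCommonEnd s r v := ⟨h.2.1, h.1, fun u a b => h.2.2 u b a⟩

/-- The strict part of the comparison of ranges. -/
def cmpS (r s v : Finset Ordinal) : Prop :=
  (∃ h1 : (r \ v).Nonempty, ∃ h2 : (s \ v).Nonempty, (r \ v).max' h1 < (s \ v).max' h2) ∨
      (r \ v = ∅ ∧ (s \ v).Nonempty)

theorem cmpS_lt {r s v : Finset Ordinal} (hv : IsMaxCommonEnd r s v) (h : cmpS r s v) :
    toColex r < toColex s := by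
  rw [Finset.Colex.toColex_lt_toColex_iff_exists_forall_lt]
  rcases h with ⟨h1, h2, h⟩ | ⟨h1, a, ha⟩
  · have hm := Finset.mem_sdiff.1 ((s \ v).max'_mem h2)
    refine ⟨(s \ v).max' h2, hm.1, fun hr => ?_, fun b hb hbs => ?_⟩
    · exact absurd ((r \ v).le_max' _ (Finset.mem_sdiff.2 ⟨hr, hm.2⟩)) (not_le.2 h)
    · exact lt_of_le_of_lt ((r \ v).le_max' _
        (Finset.mem_sdiff.2 ⟨hb, fun hbv => hbs (hv.2.1.1 hbv)⟩)) h
  · have hrv : r ⊆ v := Finset.sdiff_eq_empty_iff_subset.1 h1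
    rw [Finset.mem_sdiff] at ha
    exact ⟨a, ha.1, fun hr => ha.2 (hrv hr), fun b hb hbs => absurd (hv.2.1.1 (hrv hb)) hbs⟩

theorem max_ne {r s v : Finset Ordinal} (hv : IsMaxCommonEnd r s v)
    (h1 : (r \ v).Nonempty) (h2 : (s \ v).Nonempty) : (r \ v).max' h1 ≠ (s \ v).max' h2 := by
  intro h
  have hmr := Finset.mem_sdiff.1 ((r \ v).max'_mem h1)
  have hms := Finset.mem_sdiff.1 ((s \ v).max'_mem h2)
  rw [← h] at hms
  have key : ∀ t : Finset Ordinal, IsEndSegment t v → ∀ h3 : (t \ v).Nonempty,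
      (t \ v).max' h3 = (r \ v).max' h1 → (r \ v).max' h1 ∈ t →
      IsEndSegment t (insert ((r \ v).max' h1) v) := by
    intro t ht h3 he hm
    refine ⟨Finset.insert_subset hm ht.1, fun x hx y hy hyx => ?_⟩
    rw [Finset.mem_insert] at hy ⊢
    by_cases hxv : x ∈ v
    · exact Or.inr hxv
    rcases hy with rfl | hy
    · left
      refine le_antisymm ?_ hyx
      rw [← he]
      exact (t \ v).le_max' _ (Finset.mem_sdiff.2 ⟨hx, hxv⟩)
    · exact Or.inr (ht.2 x hx y hy hyx)
  exact hmr.2 (hv.2.2 _ (key r hv.1 h1 rfl hmr.1) (key s hv.2.1 h2 h.symm hms.1)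
    (Finset.mem_insert_self _ _))

theorem cmpS_tri {r s v : Finset Ordinal} (hv : IsMaxCommonEnd r s v) :
    cmpS r s v ∨ cmpS s r v ∨ (r \ v = ∅ ∧ s \ v = ∅) := by
  rcases (r \ v).eq_empty_or_nonempty with h1 | h1 <;>
    rcases (s \ v).eq_empty_or_nonempty with h2 | h2
  · exact Or.inr (Or.inr ⟨h1, h2⟩)
  · exact Or.inl (Or.inr ⟨h1, h2⟩)
  · exact Or.inr (Or.inl (Or.inr ⟨h2, h1⟩))
  · rcases lt_or_gt_of_ne (max_ne hv h1 h2) with h | h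
    · exact Or.inl (Or.inl ⟨h1, h2, h⟩)
    · exact Or.inr (Or.inl (Or.inl ⟨h2, h1, h⟩))

theorem eq_of_empty {r s v : Finset Ordinal} (hv : IsMaxCommonEnd r s v)
    (h1 : r \ v = ∅) (h2 : s \ v = ∅) : r = s := by
  rw [Finset.sdiff_eq_empty_iff_subset] at h1 h2
  exact (h1.antisymm hv.1.1).trans (hv.2.1.1.antisymm h2)

theorem lexLE_iff {I : Type*} [Fintype I] [LinearOrder I] (β γ : I → Ordinal) :
    lexLE β γ ↔ toLex β ≤ toLex γ := by
  rw [le_iff_eq_or_lt, lexLE]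
  refine or_congr toLex.injective.eq_iff.symm ?_
  exact exists_congr fun i => and_comm

theorem leS_iff {I : Type*} [Fintype I] [LinearOrder I] (β γ : I → Ordinal) :
    leS β γ ↔ toLex (toColex (rng β), toLex β) ≤ toLex (toColex (rng γ), toLex γ) := by
  rw [Prod.Lex.toLex_le_toLex]
  simp only [← lexLE_iff]
  constructor
  · rintro ⟨v, hv, h | h | ⟨h1, h2, h⟩⟩
    · exact Or.inl (cmpS_lt hv (Or.inl h))
    · exact Or.inl (cmpS_lt hv (Or.inr h))
    · exact Or.inr ⟨congrArg toColex (eq_of_empty hv h1 h2), h⟩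
  · intro h
    obtain ⟨v, hv⟩ := exists_maxCommonEnd (rng β) (rng γ)
    refine ⟨v, hv, ?_⟩
    rcases cmpS_tri hv with h' | h' | ⟨h1, h2⟩
    · exact h'.elim Or.inl (fun h => Or.inr (Or.inl h))
    · have hl := cmpS_lt hv.symm' h'
      rcases h with h | h
      · exact absurd hl h.not_gt
      · exact absurd h.1 hl.ne'
    · refine Or.inr (Or.inr ⟨h1, h2, ?_⟩)
      rcases h with h | h
      · rw [eq_of_empty hv h1 h2] at h
        exact absurd h (lt_irrefl _)
      · exact h.2

theorem colex_wf : WellFounded (fun a b : Colex (Finset Ordinal) => a < b) := by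
  have hw : WellFounded (Finsupp.Lex (fun a b : Ordinal => b < a) (fun m n : ℕ => m < n)) := by
    have : Std.Trichotomous (fun a b : Ordinal => b < a) :=
      ⟨fun a b h1 h2 => le_antisymm (not_lt.1 h1) (not_lt.1 h2)⟩
    exact Finsupp.Lex.wellFounded' (fun n => Nat.not_lt_zero n) wellFounded_lt
      (wellFounded_lt (α := Ordinal))
  refine Subrelation.wf (r := InvImage _
    (fun s : Colex (Finset Ordinal) => Finsupp.indicator (ofColex s) (fun _ _ => (1 : ℕ)))) ?_
    (InvImage.wf _ hw)
  intro s t hst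
  obtain ⟨a, ha, h⟩ := (Finset.Colex.lt_iff_exists_filter_lt
    (s := ofColex s) (t := ofColex t)).1 hst
  rw [Finset.mem_sdiff] at ha
  refine ⟨a, fun j hj => ?_, ?_⟩
  · have hj' : j ∈ ofColex s ↔ j ∈ ofColex t := by
      have := Finset.ext_iff.1 h j
      simp only [Finset.mem_filter] at this
      exact ⟨fun x => (this.1 ⟨x, hj⟩).1, fun x => (this.2 ⟨x, hj⟩).1⟩
    simp [Finsupp.indicator_apply, hj']
  · simp [Finsupp.indicator_apply, ha.1, ha.2]

/-- **Lemma 5.10 (the auxiliary well-order).** For a nonempty finite linear order `I` and an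
ordinal `lam`, the relation `≤_S` is a linear order on the set
`S = {β : I → Ordinal // ∀ i, β i < lam}`, and indeed a well-order: every nonempty subset
of `S` has a `≤_S`-least element. -/
theorem stmt11 {I : Type*} [Fintype I] [LinearOrder I] [Nonempty I] (lam : Ordinal) :
    (∀ β : {f : I → Ordinal // ∀ i, f i < lam}, leS β.1 β.1) ∧
    (∀ β γ : {f : I → Ordinal // ∀ i, f i < lam},
      leS β.1 γ.1 → leS γ.1 β.1 → β = γ) ∧
    (∀ β γ δ : {f : I → Ordinal // ∀ i, f i < lam},
      leS β.1 γ.1 → leS γ.1 δ.1 → leS β.1 δ.1) ∧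
    (∀ β γ : {f : I → Ordinal // ∀ i, f i < lam}, leS β.1 γ.1 ∨ leS γ.1 β.1) ∧
    (∀ T : Set {f : I → Ordinal // ∀ i, f i < lam}, T.Nonempty →
      ∃ β ∈ T, ∀ γ ∈ T, leS β.1 γ.1) := by
  simp only [leS_iff]
  refine ⟨fun _ => le_rfl, fun β γ h1 h2 => ?_, fun _ _ _ => le_trans, fun _ _ => le_total _ _, ?_⟩
  · have h := toLex.injective (le_antisymm h1 h2)
    exact Subtype.ext (toLex.injective (Prod.ext_iff.1 h).2)
  · intro T hT
    have : WellFoundedLT (Colex (Finset Ordinal)) := ⟨colex_wf⟩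
    let F : {f : I → Ordinal // ∀ i, f i < lam} → Colex (Finset Ordinal) ×ₗ Lex (I → Ordinal) :=
      fun β => toLex (toColex (rng β.1), toLex β.1)
    have hw : WellFounded (InvImage (· < ·) F) := InvImage.wf _ wellFounded_lt
    obtain ⟨β, hβ, hm⟩ := hw.has_min T hT
    exact ⟨β, hβ, fun γ hγ => not_lt.1 (hm γ hγ)⟩
end
end
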